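/- Let $d \in \mathbb{N}$, let $K \subseteq \mathbb{R}^d$ be a compact set, let $k \in \mathbb{N}$, $l \in \mathbb{N}$, let $K_1, K_2 \subseteq \mathbb{R}^d$ be compact sets and $V \subseteq \mathbb{R}^d$ a compact set containing $K \cup K_1 \cup K_2$, and suppose $\mathrm{vol}(K) > 0$. Let $\varepsilon \in (0,1)$ and let $H : \mathbb{R}^d \times \mathbb{R}^d \to \mathbb{C}$ be a smooth function with $\mathrm{supp}\, H \subseteq K \times K$ satisfying $p_{V \times V,\, l}(H) \le \ln(\varepsilon^{-k})$. Then, with $L_1 = H$, $L_{n+1}(x,y) = \int_K H(x,\xi) L_n(\xi,y)\, \mathrm{d}\xi$ and $S = \sum_{n=1}^{\infty} \frac{L_n}{n!}$, one has $p_{K_1 \times K_2,\, l}(S) \le \frac{1}{\mathrm{vol}(K)} \varepsilon^{-k\, \mathrm{vol}(K)}$. -/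

import Mathlib

open MeasureTheory Set Filter

noncomputable def dirDeriv {E : Type*} [NormedAddCommGroup E] [NormedSpace ℝ E]
    (v : E) (f : E → ℂ) : E → ℂ := fun x => fderiv ℝ f x v

noncomputable def itDeriv {E : Type*} [NormedAddCommGroup E] [NormedSpace ℝ E] :
    List E → (E → ℂ) → E → ℂ
  | [] => fun f => f
  | v :: vs => fun f => itDeriv vs (dirDeriv v f)

/-- The standard basis directions of the product space `ℝ^m × ℝ^n`. -/
def prodDirs (m n : ℕ) : Set ((Fin m → ℝ) × (Fin n → ℝ)) :=
  {v | (∃ i, v = (Pi.single i (1:ℝ), 0)) ∨ ∃ j, v = (0, Pi.single j (1:ℝ))}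

/-- The standard basis directions of `ℝ^d`. -/
def stdDirs (d : ℕ) : Set (Fin d → ℝ) := {v | ∃ i, v = Pi.single i (1:ℝ)}

/-- The seminorm `p_{A,l}(f)`: the sup over `x ∈ A` and over all partial derivatives
(iterated directional derivatives along basis directions from `B`) of order `≤ l`. -/
noncomputable def pSemi {E : Type*} [NormedAddCommGroup E] [NormedSpace ℝ E]
    (B A : Set E) (l : ℕ) (f : E → ℂ) : ℝ :=
  sSup {r | ∃ vs : List E, vs.length ≤ l ∧ (∀ v ∈ vs, v ∈ B) ∧ ∃ x ∈ A, r = ‖itDeriv vs f x‖}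

/-- The iterated kernels: `iterKer S H n` is the kernel `L_{n+1}` of the paper,
i.e. `L_1 = H` and `L_{n+1}(x,y) = ∫_S H(x,ξ) L_n(ξ,y) dξ` for `n ≥ 1`. -/
noncomputable def iterKer {d : ℕ} (S : Set (Fin d → ℝ))
    (H : (Fin d → ℝ) × (Fin d → ℝ) → ℂ) : ℕ → (Fin d → ℝ) × (Fin d → ℝ) → ℂ
  | 0 => H
  | n + 1 => fun q => ∫ ξ in S, H (q.1, ξ) * iterKer S H n (ξ, q.2)

open scoped ContDiff

section DirectionalDerivatives

variable {E : Type*} [NormedAddCommGroup E] [NormedSpace ℝ E]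

theorem ContDiff.dirDeriv {f : E → ℂ} (hf : ContDiff ℝ ∞ f) (v : E) :
    ContDiff ℝ ∞ (dirDeriv v f) :=
  (hf.fderiv_right (m := ∞) (by simp)).clm_apply contDiff_const

theorem HasCompactSupport.dirDeriv {f : E → ℂ} (hf : HasCompactSupport f) (v : E) :
    HasCompactSupport (dirDeriv v f) :=
  hf.fderiv_apply (𝕜 := ℝ) v

theorem itDeriv_const_mul (c : ℂ) (vs : List E) {f : E → ℂ} (hf : ContDiff ℝ ∞ f) :
    itDeriv vs (fun x => c * f x) = fun x => c * itDeriv vs f x := by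
  induction vs generalizing f with
  | nil => rfl
  | cons v vs ih =>
    have h : dirDeriv v (fun x => c * f x) = fun x => c * dirDeriv v f x := by
      funext x
      simp only [dirDeriv]
      rw [fderiv_const_mul (hf.differentiable (by simp) x)]
      rfl
    simp only [itDeriv]
    rw [h, ih (hf.dirDeriv v)]

/-- A smooth compactly supported function has uniformly bounded derivatives of order at most `l`
along any finite set of directions. -/
theorem exists_forall_norm_itDeriv_le {B : Set E} (hB : B.Finite) (l : ℕ) {f : E → ℂ}
    (hf : ContDiff ℝ ∞ f) (hc : HasCompactSupport f) :
    ∃ M : ℝ, ∀ vs : List E, vs.length ≤ l → (∀ v ∈ vs, v ∈ B) → ∀ x, ‖itDeriv vs f x‖ ≤ M := by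
  induction l generalizing f with
  | zero =>
    obtain ⟨C, hC⟩ := hf.continuous.bounded_above_of_compact_support hc
    refine ⟨C, fun vs hvs _ x => ?_⟩
    obtain rfl : vs = [] := List.length_eq_zero_iff.1 (by lia)
    exact hC x
  | succ l ih =>
    obtain ⟨C, hC⟩ := hf.continuous.bounded_above_of_compact_support hc
    choose M hM using fun v : E => ih (hf.dirDeriv v) (hc.dirDeriv v)
    obtain ⟨D, hD⟩ := (hB.image M).bddAbove
    refine ⟨max C D, fun vs hvs hvB x => ?_⟩
    cases vs with
    | nil => exact (hC x).trans (le_max_left _ _)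
    | cons v vs =>
      simp only [List.length_cons, add_le_add_iff_right] at hvs
      simp only [List.mem_cons, forall_eq_or_imp] at hvB
      exact ((hM v vs hvs hvB.2 x).trans (hD (mem_image_of_mem _ hvB.1))).trans (le_max_right _ _)

theorem norm_itDeriv_le_pSemi {A B : Set E} {l : ℕ} {f : E → ℂ} {M : ℝ}
    (hM : ∀ vs : List E, vs.length ≤ l → (∀ v ∈ vs, v ∈ B) → ∀ x, ‖itDeriv vs f x‖ ≤ M)
    {vs : List E} (hvs : vs.length ≤ l) (hvB : ∀ v ∈ vs, v ∈ B) {x : E} (hx : x ∈ A) :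
    ‖itDeriv vs f x‖ ≤ pSemi B A l f := by
  refine le_csSup ⟨M, ?_⟩ ⟨vs, hvs, hvB, x, hx, rfl⟩
  rintro _ ⟨ws, hws, hwB, y, -, rfl⟩
  exact hM ws hws hwB y

theorem pSemi_le {A B : Set E} {l : ℕ} {f : E → ℂ} {C : ℝ} (hC : 0 ≤ C)
    (h : ∀ vs : List E, vs.length ≤ l → (∀ v ∈ vs, v ∈ B) → ∀ x ∈ A, ‖itDeriv vs f x‖ ≤ C) :
    pSemi B A l f ≤ C := by
  refine Real.sSup_le ?_ hC
  rintro _ ⟨vs, hvs, hvB, x, hx, rfl⟩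
  exact h vs hvs hvB x hx

/-- Differentiation under the integral sign over a compact set for a smooth integrand. -/
theorem hasFDerivAt_setIntegral_of_contDiff [ProperSpace E] {X : Type*} [NormedAddCommGroup X]
    [NormedSpace ℝ X] [MeasurableSpace X] [BorelSpace X] {μ : Measure X}
    [IsFiniteMeasureOnCompacts μ] {S : Set X} (hS : IsCompact S) {Φ : E × X → ℂ}
    (hΦ : ContDiff ℝ ∞ Φ) (q : E) :
    IntegrableOn (fun ξ => (fderiv ℝ Φ (q, ξ)).comp (ContinuousLinearMap.inl ℝ E X)) S μ ∧
    HasFDerivAt (fun q => ∫ ξ in S, Φ (q, ξ) ∂μ)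
      (∫ ξ in S, (fderiv ℝ Φ (q, ξ)).comp (ContinuousLinearMap.inl ℝ E X) ∂μ) q := by
  have hcont : Continuous fun p : E × X =>
      (fderiv ℝ Φ p).comp (ContinuousLinearMap.inl ℝ E X) :=
    (hΦ.continuous_fderiv (by simp)).clm_comp continuous_const
  have hint : ∀ q, IntegrableOn (fun ξ => Φ (q, ξ)) S μ := fun q =>
    (hΦ.continuous.comp (Continuous.prodMk_right q)).continuousOn.integrableOn_compact hS
  have hint' : IntegrableOn
      (fun ξ => (fderiv ℝ Φ (q, ξ)).comp (ContinuousLinearMap.inl ℝ E X)) S μ :=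
    (hcont.comp (Continuous.prodMk_right q)).continuousOn.integrableOn_compact hS
  refine ⟨hint', ?_⟩
  obtain ⟨C, hC⟩ := ((isCompact_closedBall q 1).prod hS).exists_bound_of_continuousOn
    hcont.continuousOn
  refine hasFDerivAt_integral_of_dominated_of_fderiv_le (bound := fun _ => C)
    (F' := fun q ξ => (fderiv ℝ Φ (q, ξ)).comp (ContinuousLinearMap.inl ℝ E X))
    (Metric.closedBall_mem_nhds q one_pos) (.of_forall fun q => (hint q).aestronglyMeasurable)
    (hint q) hint'.aestronglyMeasurable ?_ ?_ ?_
  · filter_upwards [ae_restrict_mem hS.measurableSet] with ξ hξ x hx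
    exact hC (x, ξ) ⟨hx, hξ⟩
  · exact integrableOn_const hS.measure_ne_top
  · refine .of_forall fun ξ x _ => ?_
    exact ((hΦ.differentiable (by simp)) (x, ξ)).hasFDerivAt.comp x (hasFDerivAt_prodMk_left x ξ)

end DirectionalDerivatives

section Kernels

variable {d : ℕ}

/-- The composition of two integral kernels over the set `S`. -/
noncomputable def kerComp (S : Set (Fin d → ℝ)) (F G : (Fin d → ℝ) × (Fin d → ℝ) → ℂ) :
    (Fin d → ℝ) × (Fin d → ℝ) → ℂ :=
  fun q => ∫ ξ in S, F (q.1, ξ) * G (ξ, q.2)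

theorem fderiv_kerComp {S : Set (Fin d → ℝ)} (hS : IsCompact S)
    {F G : (Fin d → ℝ) × (Fin d → ℝ) → ℂ} (hF : ContDiff ℝ ∞ F) (hG : ContDiff ℝ ∞ G)
    (q : (Fin d → ℝ) × (Fin d → ℝ)) :
    DifferentiableAt ℝ (kerComp S F G) q ∧ ∀ w, fderiv ℝ (kerComp S F G) q w =
      kerComp S (dirDeriv (w.1, 0) F) G q + kerComp S F (dirDeriv (0, w.2) G) q := by
  let Φ : ((Fin d → ℝ) × (Fin d → ℝ)) × (Fin d → ℝ) → ℂ := fun p =>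
    F (p.1.1, p.2) * G (p.2, p.1.2)
  have hΦ : ContDiff ℝ ∞ Φ := by fun_prop
  obtain ⟨hint, hd⟩ := hasFDerivAt_setIntegral_of_contDiff (μ := volume) hS hΦ q
  refine ⟨hd.differentiableAt, fun w => ?_⟩
  have hcont : ∀ {F G : (Fin d → ℝ) × (Fin d → ℝ) → ℂ}, ContDiff ℝ ∞ F → ContDiff ℝ ∞ G →
      IntegrableOn (fun ξ => F (q.1, ξ) * G (ξ, q.2)) S := fun {F G} hF hG =>
    ((hF.continuous.comp (by fun_prop)).mul
      (hG.continuous.comp (by fun_prop))).continuousOn.integrableOn_compact hS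
  have hfd : fderiv ℝ (kerComp S F G) q = _ := hd.fderiv
  rw [hfd, ContinuousLinearMap.integral_apply hint, kerComp, kerComp,
    ← integral_add (hcont (hF.dirDeriv _) hG) (hcont hF (hG.dirDeriv _))]
  refine integral_congr_ae (.of_forall fun ξ => ?_)
  let A : ((Fin d → ℝ) × (Fin d → ℝ)) × (Fin d → ℝ) →L[ℝ] (Fin d → ℝ) × (Fin d → ℝ) :=
    ((ContinuousLinearMap.fst ℝ _ _).comp (ContinuousLinearMap.fst ℝ _ _)).prod
      (ContinuousLinearMap.snd ℝ _ _)
  let B : ((Fin d → ℝ) × (Fin d → ℝ)) × (Fin d → ℝ) →L[ℝ] (Fin d → ℝ) × (Fin d → ℝ) :=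
    (ContinuousLinearMap.snd ℝ _ _).prod
      ((ContinuousLinearMap.snd ℝ _ _).comp (ContinuousLinearMap.fst ℝ _ _))
  have h1 : HasFDerivAt (fun p => F (A p)) ((fderiv ℝ F (q.1, ξ)).comp A) (q, ξ) :=
    ((hF.differentiable (by simp)) (q.1, ξ)).hasFDerivAt.comp (f := A) (q, ξ) A.hasFDerivAt
  have h2 : HasFDerivAt (fun p => G (B p)) ((fderiv ℝ G (ξ, q.2)).comp B) (q, ξ) :=
    ((hG.differentiable (by simp)) (ξ, q.2)).hasFDerivAt.comp (f := B) (q, ξ) B.hasFDerivAt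
  have h3 : fderiv ℝ Φ (q, ξ) = _ := (h1.mul h2).fderiv
  simp only [h3, dirDeriv]
  simp [A, B]
  ring

theorem contDiff_kerComp {S : Set (Fin d → ℝ)} (hS : IsCompact S)
    {F G : (Fin d → ℝ) × (Fin d → ℝ) → ℂ} (hF : ContDiff ℝ ∞ F) (hG : ContDiff ℝ ∞ G) :
    ContDiff ℝ ∞ (kerComp S F G) := by
  refine contDiff_infty.2 fun n => ?_
  induction n generalizing F G with
  | zero =>
    exact contDiff_zero.2 (continuous_iff_continuousAt.2 fun q =>
      (fderiv_kerComp hS hF hG q).1.continuousAt)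
  | succ n ih =>
    refine contDiff_succ_iff_fderiv_apply.2
      ⟨fun q => (fderiv_kerComp hS hF hG q).1, fun h => absurd h (WithTop.natCast_ne_top n), fun w => ?_⟩
    simp only [(fderiv_kerComp hS hF hG _).2 w]
    exact (ih (hF.dirDeriv _) hG).add (ih hF (hG.dirDeriv _))

theorem dirDeriv_zero {E : Type*} [NormedAddCommGroup E] [NormedSpace ℝ E] (f : E → ℂ) :
    dirDeriv 0 f = 0 := by
  funext x
  simp [dirDeriv]

/-- Partial derivatives of a composed kernel fall on the first factor in the first variable and on
the second factor in the second variable. -/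
theorem exists_itDeriv_kerComp {S : Set (Fin d → ℝ)} (hS : IsCompact S)
    (vs : List ((Fin d → ℝ) × (Fin d → ℝ))) (hvs : ∀ v ∈ vs, v ∈ prodDirs d d)
    {F G : (Fin d → ℝ) × (Fin d → ℝ) → ℂ} (hF : ContDiff ℝ ∞ F) (hG : ContDiff ℝ ∞ G) :
    ∃ as bs : List ((Fin d → ℝ) × (Fin d → ℝ)), as.length ≤ vs.length ∧ bs.length ≤ vs.length ∧
      (∀ v ∈ as, v ∈ prodDirs d d) ∧ (∀ v ∈ bs, v ∈ prodDirs d d) ∧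
      itDeriv vs (kerComp S F G) = kerComp S (itDeriv as F) (itDeriv bs G) := by
  induction vs generalizing F G with
  | nil => exact ⟨[], [], by simp [itDeriv]⟩
  | cons v vs ih =>
    simp only [List.mem_cons, forall_eq_or_imp] at hvs
    have hd : dirDeriv v (kerComp S F G) = fun q =>
        kerComp S (dirDeriv (v.1, 0) F) G q + kerComp S F (dirDeriv (0, v.2) G) q :=
      funext fun q => (fderiv_kerComp hS hF hG q).2 v
    rcases hvs.1 with ⟨i, hi⟩ | ⟨i, hi⟩
    · have hd' : dirDeriv v (kerComp S F G) = kerComp S (dirDeriv v F) G := by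
        have h0 : ((0, 0) : (Fin d → ℝ) × (Fin d → ℝ)) = 0 := rfl
        rw [hd, hi]
        funext q
        simp only [h0, dirDeriv_zero]
        simp [kerComp]
      obtain ⟨as, bs, ha, hb, ha', hb', h⟩ := ih hvs.2 (hF.dirDeriv v) hG
      refine ⟨v :: as, bs, by simpa using ha, by simp; lia, ?_, hb', ?_⟩
      · exact List.forall_mem_cons.2 ⟨hvs.1, ha'⟩
      · simp only [itDeriv]
        rw [hd', h]
    · have hd' : dirDeriv v (kerComp S F G) = kerComp S F (dirDeriv v G) := by
        have h0 : ((0, 0) : (Fin d → ℝ) × (Fin d → ℝ)) = 0 := rfl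
        rw [hd, hi]
        funext q
        simp only [h0, dirDeriv_zero]
        simp [kerComp]
      obtain ⟨as, bs, ha, hb, ha', hb', h⟩ := ih hvs.2 hF (hG.dirDeriv v)
      refine ⟨as, v :: bs, by simp; lia, by simpa using hb, ha', ?_, ?_⟩
      · exact List.forall_mem_cons.2 ⟨hvs.1, hb'⟩
      · simp only [itDeriv]
        rw [hd', h]

theorem contDiff_iterKer {S : Set (Fin d → ℝ)} (hS : IsCompact S)
    {H : (Fin d → ℝ) × (Fin d → ℝ) → ℂ} (hH : ContDiff ℝ ∞ H) (n : ℕ) :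
    ContDiff ℝ ∞ (iterKer S H n) := by
  induction n with
  | zero => exact hH
  | succ n ih => exact contDiff_kerComp hS hH ih

theorem norm_itDeriv_iterKer_le {S V : Set (Fin d → ℝ)} (hS : IsCompact S) (hSV : S ⊆ V)
    {H : (Fin d → ℝ) × (Fin d → ℝ) → ℂ} (hH : ContDiff ℝ ∞ H) {l : ℕ} {M : ℝ}
    (hM : ∀ vs : List ((Fin d → ℝ) × (Fin d → ℝ)), vs.length ≤ l →
      (∀ v ∈ vs, v ∈ prodDirs d d) → ∀ q ∈ V ×ˢ V, ‖itDeriv vs H q‖ ≤ M) (n : ℕ)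
    {vs : List ((Fin d → ℝ) × (Fin d → ℝ))} (hvl : vs.length ≤ l)
    (hvs : ∀ v ∈ vs, v ∈ prodDirs d d) {q : (Fin d → ℝ) × (Fin d → ℝ)} (hq : q ∈ V ×ˢ V) :
    ‖itDeriv vs (iterKer S H n) q‖ ≤ M ^ (n + 1) * (volume S).toReal ^ n := by
  induction n generalizing vs q with
  | zero => simpa [iterKer] using hM vs hvl hvs q hq
  | succ n ih =>
    obtain ⟨as, bs, ha, hb, ha', hb', h⟩ :=
      exists_itDeriv_kerComp hS vs hvs hH (contDiff_iterKer hS hH n)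
    change ‖itDeriv vs (kerComp S H (iterKer S H n)) q‖ ≤ _
    rw [h]
    have hM0 : 0 ≤ M := (norm_nonneg _).trans (hM vs hvl hvs q hq)
    refine (norm_setIntegral_le_of_norm_le_const (C := M * (M ^ (n + 1) * (volume S).toReal ^ n))
      hS.measure_lt_top fun ξ hξ => ?_).trans (le_of_eq ?_)
    · rw [norm_mul]
      exact mul_le_mul (hM as (ha.trans hvl) ha' _ ⟨hq.1, hSV hξ⟩)
        (ih (hb.trans hvl) hb' ⟨hSV hξ, hq.2⟩) (norm_nonneg _) hM0
    · rw [Measure.real]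
      ring

theorem finite_prodDirs (m n : ℕ) : (prodDirs m n).Finite := by
  have h : prodDirs m n = range (fun i => (Pi.single i (1 : ℝ), (0 : Fin n → ℝ))) ∪
      range (fun j => ((0 : Fin m → ℝ), Pi.single j (1 : ℝ))) := by
    ext v
    simp [prodDirs, eq_comm]
  rw [h]
  exact (finite_range _).union (finite_range _)

/-- The operator norm of a functional is controlled by its values on the standard basis. -/
theorem opNorm_le_of_prodDirs {m n : ℕ} (T : (Fin m → ℝ) × (Fin n → ℝ) →L[ℝ] ℂ) {C : ℝ}
    (hC : 0 ≤ C) (h : ∀ v ∈ prodDirs m n, ‖T v‖ ≤ C) : ‖T‖ ≤ (m + n) * C := by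
  refine T.opNorm_le_bound (by positivity) fun w => ?_
  have hw : T w = ∑ i, w.1 i • T (Pi.single i 1, 0) + ∑ j, w.2 j • T (0, Pi.single j 1) := by
    have hs : ∀ {r : ℕ} (i : Fin r),
        (Pi.single i 1 : Fin r → ℝ) = fun j => if i = j then 1 else 0 := by
      intro r i
      ext j
      simp [Pi.single_apply, eq_comm]
    have h1 : T (w.1, 0) = ∑ i, w.1 i • T (Pi.single i 1, 0) := by
      simpa [hs] using (T.comp (ContinuousLinearMap.inl ℝ _ _)).toLinearMap.pi_apply_eq_sum_univ w.1
    have h2 : T (0, w.2) = ∑ j, w.2 j • T (0, Pi.single j 1) := by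
      simpa [hs] using (T.comp (ContinuousLinearMap.inr ℝ _ _)).toLinearMap.pi_apply_eq_sum_univ w.2
    rw [← h1, ← h2, ← map_add]
    simp
  have hb : ∀ {t : ℝ} {v}, |t| ≤ ‖w‖ → v ∈ prodDirs m n → ‖t • T v‖ ≤ C * ‖w‖ := by
    intro t v ht hv
    rw [norm_smul, mul_comm, Real.norm_eq_abs]
    exact mul_le_mul (h v hv) ht (abs_nonneg _) hC
  rw [hw]
  calc _ ≤ ∑ _i : Fin m, C * ‖w‖ + ∑ _j : Fin n, C * ‖w‖ :=
        (norm_add_le _ _).trans (add_le_add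
          (norm_sum_le_of_le _ fun i _ => hb ((norm_le_pi_norm w.1 i).trans (norm_fst_le w))
            (Or.inl ⟨i, rfl⟩))
          (norm_sum_le_of_le _ fun j _ => hb ((norm_le_pi_norm w.2 j).trans (norm_snd_le w))
            (Or.inr ⟨j, rfl⟩)))
    _ = (m + n) * C * ‖w‖ := by
        simp
        ring

/-- Termwise differentiation of a series all of whose partial derivatives are dominated. -/
theorem itDeriv_tsum {m n : ℕ} {f : ℕ → (Fin m → ℝ) × (Fin n → ℝ) → ℂ}
    (hf : ∀ i, ContDiff ℝ ∞ (f i))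
    (hb : ∀ l, ∃ u : ℕ → ℝ, Summable u ∧ ∀ vs : List ((Fin m → ℝ) × (Fin n → ℝ)),
      vs.length ≤ l → (∀ v ∈ vs, v ∈ prodDirs m n) → ∀ i q, ‖itDeriv vs (f i) q‖ ≤ u i)
    (vs : List ((Fin m → ℝ) × (Fin n → ℝ))) (hvs : ∀ v ∈ vs, v ∈ prodDirs m n) :
    itDeriv vs (fun q => ∑' i, f i q) = fun q => ∑' i, itDeriv vs (f i) q := by
  induction vs generalizing f with
  | nil => rfl
  | cons v vs ih =>
    simp only [List.mem_cons, forall_eq_or_imp] at hvs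
    obtain ⟨u, hu, hub⟩ := hb 1
    have hu0 : ∀ i, 0 ≤ u i := fun i =>
      (norm_nonneg _).trans (hub [] (by simp) (by simp) i 0)
    have hfd : ∀ i q, ‖fderiv ℝ (f i) q‖ ≤ (m + n) * u i := fun i q =>
      opNorm_le_of_prodDirs _ (hu0 i) fun w hw => hub [w] (by simp) (by simpa using hw) i q
    have hd : dirDeriv v (fun q => ∑' i, f i q) = fun q => ∑' i, dirDeriv v (f i) q := by
      funext q
      simp only [dirDeriv]
      rw [fderiv_tsum_apply (hu.mul_left _) (fun i => (hf i).differentiable (by simp)) hfd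
        (.of_norm_bounded hu fun i => hub [] (by simp) (by simp) i 0)]
      exact (ContinuousLinearMap.apply ℝ ℂ v).map_tsum
        (.of_norm_bounded (hu.mul_left _) fun i => hfd i q)
    simp only [itDeriv]
    rw [hd, ih (fun i => (hf i).dirDeriv v) (fun l => ?_) hvs.2]
    obtain ⟨u, hu, hub⟩ := hb (l + 1)
    exact ⟨u, hu, fun ws hws hwB =>
      hub (v :: ws) (by simpa using hws) (List.forall_mem_cons.2 ⟨hvs.1, hwB⟩)⟩

theorem hasSum_inv_factorial_succ_mul (M : ℝ) {v : ℝ} (hv : v ≠ 0) :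
    HasSum (fun n : ℕ => ((n + 1).factorial : ℝ)⁻¹ * (M ^ (n + 1) * v ^ n))
      (v⁻¹ * (Real.exp (M * v) - 1)) := by
  have h := NormedSpace.expSeries_div_hasSum_exp (M * v)
  rw [← Real.exp_eq_exp_ℝ] at h
  have h' := ((hasSum_nat_add_iff' 1).2 h).mul_left v⁻¹
  simp only [Finset.range_one, Finset.sum_singleton, pow_zero, Nat.factorial_zero, Nat.cast_one,
    div_one] at h'
  refine h'.congr_fun fun n => ?_
  field_simp
  ring

end Kernels

/-- If `p_{V×V,l}(H) ≤ ln(ε^{-k})`, then the exponential kernel satisfies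
`p_{K₁×K₂,l}(S) ≤ (1/vol(K)) ε^{-k·vol(K)}`. -/
theorem exponential_kernel_log_estimate
    {d : ℕ} (S : Set (Fin d → ℝ)) (hS : IsCompact S) (k l : ℕ)
    (K₁ K₂ V : Set (Fin d → ℝ))
    (hK₁ : IsCompact K₁) (hK₂ : IsCompact K₂) (hV : IsCompact V)
    (hKV : S ∪ K₁ ∪ K₂ ⊆ V)
    (hvol : 0 < (volume S).toReal)
    (ε : ℝ) (hε : ε ∈ Ioo (0:ℝ) 1)
    (H : (Fin d → ℝ) × (Fin d → ℝ) → ℂ) (hH : ContDiff ℝ (⊤:ℕ∞) H)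
    (hsupp : Function.support H ⊆ S ×ˢ S)
    (hbound : pSemi (prodDirs d d) (V ×ˢ V) l H ≤ Real.log (ε ^ (-(k:ℤ))))
    (Sfun : (Fin d → ℝ) × (Fin d → ℝ) → ℂ)
    (hSfun : ∀ q, Sfun q = ∑' n : ℕ, (((n+1).factorial : ℂ))⁻¹ * iterKer S H n q) :
    pSemi (prodDirs d d) (K₁ ×ˢ K₂) l Sfun ≤
      ((volume S).toReal)⁻¹ * ε ^ (-((k : ℝ) * (volume S).toReal)) := by
  have hSV : S ⊆ V := fun x hx => hKV (Or.inl (Or.inl hx))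
  have hsm : HasCompactSupport H := HasCompactSupport.of_support_subset_isCompact (hS.prod hS) hsupp
  have hL := contDiff_iterKer hS hH
  set v := (volume S).toReal
  set M := pSemi (prodDirs d d) (V ×ˢ V) l H
  have hM : ∀ vs : List ((Fin d → ℝ) × (Fin d → ℝ)), vs.length ≤ l →
      (∀ w ∈ vs, w ∈ prodDirs d d) → ∀ q ∈ V ×ˢ V, ‖itDeriv vs H q‖ ≤ M := by
    obtain ⟨C, hC⟩ := exists_forall_norm_itDeriv_le (finite_prodDirs d d) l hH hsm
    exact fun vs hvl hvs q hq => norm_itDeriv_le_pSemi hC hvl hvs hq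
  have hterm : ∀ (n : ℕ) vs, itDeriv vs (fun q => ((n + 1).factorial : ℂ)⁻¹ * iterKer S H n q) =
      fun q => ((n + 1).factorial : ℂ)⁻¹ * itDeriv vs (iterKer S H n) q := fun n vs =>
    itDeriv_const_mul _ vs (hL n)
  have hnorm : ∀ {n : ℕ} {z : ℂ} {b : ℝ}, ‖z‖ ≤ b →
      ‖((n + 1).factorial : ℂ)⁻¹ * z‖ ≤ ((n + 1).factorial : ℝ)⁻¹ * b := by
    intro n z b hz
    rw [norm_mul, norm_inv, Complex.norm_natCast]
    gcongr
  have hS' : Sfun = fun q => ∑' n : ℕ, (((n + 1).factorial : ℂ))⁻¹ * iterKer S H n q :=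
    funext hSfun
  have hexp : Real.exp (M * v) ≤ ε ^ (-((k : ℝ) * v)) := by
    rw [Real.rpow_def_of_pos hε.1, Real.exp_le_exp]
    rw [Real.log_zpow] at hbound
    push_cast at hbound
    calc M * v ≤ -(k : ℝ) * Real.log ε * v := by gcongr
      _ = _ := by ring
  refine pSemi_le (mul_nonneg (inv_nonneg.2 hvol.le) (Real.rpow_nonneg hε.1.le _))
    fun vs hvl hvs q hq => ?_
  have hqV : q ∈ V ×ˢ V := ⟨hKV (Or.inl (Or.inr hq.1)), hKV (Or.inr hq.2)⟩
  rw [hS', itDeriv_tsum (fun n => contDiff_const.mul (hL n)) (fun j => ?_) vs hvs]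
  · simp only [hterm]
    calc _ ≤ v⁻¹ * (Real.exp (M * v) - 1) :=
          tsum_of_norm_bounded (hasSum_inv_factorial_succ_mul M hvol.ne') fun n =>
            hnorm (norm_itDeriv_iterKer_le hS hSV hH hM n hvl hvs hqV)
      _ ≤ v⁻¹ * ε ^ (-((k : ℝ) * v)) := by
          gcongr
          linarith
  · obtain ⟨C, hC⟩ := exists_forall_norm_itDeriv_le (finite_prodDirs d d) j hH hsm
    refine ⟨_, (hasSum_inv_factorial_succ_mul C hvol.ne').summable, fun ws hwl hws n p => ?_⟩
    rw [hterm]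
    exact hnorm (norm_itDeriv_iterKer_le hS (subset_univ S) hH
      (fun us hul hus x _ => hC us hul hus x) n hwl hws (by simp))
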